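/- Let J ⊂ ℂ be a Jordan curve, i.e. the image of a continuous injective map from the unit circle into ℂ, and assume J is rectifiable in the sense that its one-dimensional Hausdorff measure H¹(J) is finite. Let f be a nonnegative function on J, integrable with respect to H¹ restricted to J, with ∫_J f dH¹ > 0, and let F : J → ∂𝔻 be a homeomorphism onto the unit circle. Then there exists a unique point w ∈ 𝔻 such that ∫_J T_w(F(z)) f(z) dH¹(z) = 0 (as a complex number). -/

import Mathlib

open MeasureTheory Metric Filter
open scoped Classical

/-- The Möbius transformation `T_w(z) = (z+w)/(1+z·conj w)` of the closed unit disk. -/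
noncomputable def mobiusTc (w z : ℂ) : ℂ := (z + w) / (1 + z * (starRingEnd ℂ) w)

/-!
Push the measure `f dH¹` forward by `F`: this is a finite nonzero measure `ν` without atoms on the
unit circle, and the claim is that `ν` has a unique conformal barycentre, i.e. a unique `w` in the
disk at which the map `V(w) = ∫ T_w dν` vanishes.

Existence: `V` is continuous, because for `‖z‖ = 1` the integrand is continuous in `w` except at
`z = -w`, a null point. For `‖w‖ = 1` one has `T_w = w` almost everywhere, so there
`‖V(w)‖ = ν(ℂ) > ‖V(0)‖`, and the minimum of `‖V‖` over the closed disk is attained at some `w` in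
the open disk. Since `T_h ∘ T_w` is a rotation of `T_{T_w(h)}`, replacing `ν` by its image under
`T_w` moves this minimum to `0`. To first order `V(h) ≈ V(0) + ν(ℂ) h - (∫ z² dν) conj h`, where
`‖∫ z² dν‖ < ν(ℂ)`, so a small step `h = -t V(0)` decreases `‖V‖` unless `V(0) = 0`.

Uniqueness: after the same recentring one compares a zero at `0` with a zero at `h ≠ 0`. For
`‖z‖ = 1` the real part of `conj h (T_h z - z)` is nonnegative and vanishes only when `z conj h` is
real, i.e. at two points `z`, whereas its integral is zero.
-/

open scoped ComplexConjugate

section Mobius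

variable {z w h : ℂ}

lemma mul_conj_eq_one_of_norm_eq_one (hz : ‖z‖ = 1) : z * conj z = 1 := by
  simp [Complex.mul_conj', hz]

lemma norm_one_add_mul_conj_sq_sub (z w : ℂ) :
    ‖1 + z * conj w‖ ^ 2 - ‖z + w‖ ^ 2 = (1 - ‖z‖ ^ 2) * (1 - ‖w‖ ^ 2) := by
  simp only [← Complex.normSq_eq_norm_sq, Complex.normSq_apply, Complex.add_re, Complex.add_im,
    Complex.one_re, Complex.one_im, Complex.mul_re, Complex.mul_im, Complex.conj_re,
    Complex.conj_im]
  ring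

lemma one_add_mul_conj_ne_zero (hz : ‖z‖ ≤ 1) (hw : ‖w‖ < 1) : 1 + z * conj w ≠ 0 := by
  intro h
  have hnorm : ‖z‖ * ‖w‖ = 1 := by
    simpa using congrArg norm (eq_neg_of_add_eq_zero_right h)
  nlinarith [norm_nonneg z, norm_nonneg w]

lemma norm_add_eq_norm_one_add_mul_conj (hz : ‖z‖ = 1) (w : ℂ) :
    ‖z + w‖ = ‖1 + z * conj w‖ := by
  have hsq := norm_one_add_mul_conj_sq_sub z w
  rw [hz, one_pow, sub_self, zero_mul, sub_eq_zero] at hsq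
  exact ((sq_eq_sq₀ (norm_nonneg _) (norm_nonneg _)).1 hsq).symm

lemma norm_mobiusTc_le_one (hz : ‖z‖ = 1) (w : ℂ) : ‖mobiusTc w z‖ ≤ 1 := by
  rw [mobiusTc, norm_div, norm_add_eq_norm_one_add_mul_conj hz]
  exact div_self_le_one _

lemma norm_mobiusTc_eq_one (hz : ‖z‖ = 1) (hw : ‖w‖ < 1) : ‖mobiusTc w z‖ = 1 := by
  rw [mobiusTc, norm_div, norm_add_eq_norm_one_add_mul_conj hz]
  exact div_self (norm_ne_zero_iff.2 (one_add_mul_conj_ne_zero hz.le hw))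

lemma norm_mobiusTc_lt_one (hz : ‖z‖ < 1) (hw : ‖w‖ < 1) : ‖mobiusTc w z‖ < 1 := by
  rw [mobiusTc, norm_div,
    div_lt_one (norm_pos_iff.2 (one_add_mul_conj_ne_zero hz.le hw))]
  have hz' : ‖z‖ ^ 2 < 1 := pow_lt_one₀ (norm_nonneg z) hz two_ne_zero
  have hw' : ‖w‖ ^ 2 < 1 := pow_lt_one₀ (norm_nonneg w) hw two_ne_zero
  refine lt_of_pow_lt_pow_left₀ 2 (norm_nonneg _) (sub_pos.1 ?_)
  rw [norm_one_add_mul_conj_sq_sub]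
  exact mul_pos (sub_pos.2 hz') (sub_pos.2 hw')

lemma mobiusTc_zero_left (z : ℂ) : mobiusTc 0 z = z := by simp [mobiusTc]

lemma mobiusTc_eq_self_of_norm_eq_one (hw : ‖w‖ = 1) (hzw : z ≠ -w) : mobiusTc w z = w := by
  have hne : z + w ≠ 0 := fun h => hzw (eq_neg_of_add_eq_zero_left h)
  have hfactor : z + w = w * (1 + z * conj w) := by
    linear_combination -z * mul_conj_eq_one_of_norm_eq_one hw
  have hden : 1 + z * conj w ≠ 0 := right_ne_zero_of_mul (hfactor ▸ hne)
  rw [mobiusTc, div_eq_iff hden, hfactor]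

lemma mobiusTc_neg_mobiusTc (hz : ‖z‖ ≤ 1) (hw : ‖w‖ < 1) :
    mobiusTc (-w) (mobiusTc w z) = z := by
  have hden := one_add_mul_conj_ne_zero hz hw
  have hww : 1 - w * conj w ≠ 0 := by
    simpa [← sub_eq_add_neg] using
      one_add_mul_conj_ne_zero (z := -w) (by simpa using hw.le) hw
  have hnum : mobiusTc w z + -w = z * (1 - w * conj w) / (1 + z * conj w) := by
    rw [mobiusTc]
    field_simp
    ring
  have hden' : 1 + mobiusTc w z * conj (-w) = (1 - w * conj w) / (1 + z * conj w) := by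
    rw [mobiusTc, map_neg]
    field_simp
    ring
  rw [mobiusTc, hnum, hden', div_div_div_cancel_right₀ hden, mul_div_cancel_right₀ _ hww]

lemma injOn_mobiusTc (hw : ‖w‖ < 1) : Set.InjOn (mobiusTc w) (closedBall 0 1) :=
  Set.LeftInvOn.injOn fun _ hz => mobiusTc_neg_mobiusTc (mem_closedBall_zero_iff.1 hz) hw

lemma mobiusTc_mobiusTc (hz : ‖z‖ ≤ 1) (hw : ‖w‖ < 1) (hh : ‖h‖ ≤ 1) :
    mobiusTc h (mobiusTc w z) =
      (1 + h * conj w) / conj (1 + h * conj w) * mobiusTc (mobiusTc w h) z := by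
  have hzw := one_add_mul_conj_ne_zero hz hw
  have hhw := one_add_mul_conj_ne_zero hh hw
  have hhw' : 1 + conj h * w ≠ 0 := by simpa using (map_ne_zero conj).2 hhw
  have hlhs : mobiusTc h (mobiusTc w z) =
      (z + w + h * (1 + z * conj w)) / (1 + z * conj w + (z + w) * conj h) := by
    rw [mobiusTc, ← mul_div_mul_right _ _ hzw]
    congr 1 <;> rw [mobiusTc] <;> field_simp
  have hrhs : mobiusTc (mobiusTc w h) z =
      (z * (1 + h * conj w) + (h + w)) / (1 + h * conj w) /
        ((1 + conj h * w + z * (conj h + conj w)) / (1 + conj h * w)) := by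
    simp only [mobiusTc, map_div₀, map_add, map_mul, map_one, Complex.conj_conj]
    congr 1 <;> field_simp
  have hnum : z + w + h * (1 + z * conj w) = z * (1 + h * conj w) + (h + w) := by ring
  have hden : 1 + z * conj w + (z + w) * conj h = 1 + conj h * w + z * (conj h + conj w) := by
    ring
  have hconj : conj (1 + h * conj w) = 1 + conj h * w := by simp
  have hcancel (N B : ℂ) {a b : ℂ} (ha : a ≠ 0) (hb : b ≠ 0) :
      N / B = a / b * (N / a / (B / b)) := by field_simp
  rw [hlhs, hrhs, hnum, hden, hconj]
  exact hcancel _ _ hhw hhw'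

lemma continuousAt_mobiusTc_left (hz : ‖z‖ = 1) (hzw : z ≠ -w) :
    ContinuousAt (fun v => mobiusTc v z) w := by
  have hden : 1 + z * conj w ≠ 0 := by
    rw [← norm_ne_zero_iff, ← norm_add_eq_norm_one_add_mul_conj hz, norm_ne_zero_iff]
    exact fun h => hzw (eq_neg_of_add_eq_zero_left h)
  have hcont : Continuous fun v : ℂ => 1 + z * conj v := by fun_prop
  exact (continuousAt_const.add continuousAt_id).div hcont.continuousAt hden

lemma measurable_mobiusTc (w : ℂ) : Measurable (mobiusTc w) := by
  unfold mobiusTc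
  fun_prop

lemma norm_mobiusTc_sub_linear_le (hz : ‖z‖ = 1) (hh : ‖h‖ ≤ 1 / 2) :
    ‖mobiusTc h z - (z + h - z ^ 2 * conj h)‖ ≤ 4 * ‖h‖ ^ 2 := by
  have hden := one_add_mul_conj_ne_zero hz.le (hh.trans_lt one_half_lt_one)
  have hremainder : mobiusTc h z - (z + h - z ^ 2 * conj h) =
      (z ^ 3 * conj h ^ 2 - z * h * conj h) / (1 + z * conj h) := by
    rw [mobiusTc, eq_div_iff hden, sub_mul, div_mul_cancel₀ _ hden]
    ring
  have hnum : ‖z ^ 3 * conj h ^ 2 - z * h * conj h‖ ≤ 2 * ‖h‖ ^ 2 := by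
    refine (norm_sub_le _ _).trans_eq ?_
    simp only [norm_mul, norm_pow, Complex.norm_conj, hz]
    ring
  have hden_ge : 1 / 2 ≤ ‖1 + z * conj h‖ := by
    have := norm_sub_le_norm_add 1 (z * conj h)
    rw [norm_mul, Complex.norm_conj, hz, norm_one] at this
    linarith
  rw [hremainder, norm_div, div_le_iff₀ (by linarith)]
  nlinarith [sq_nonneg ‖h‖]

lemma re_conj_mul_mobiusTc_sub (hz : ‖z‖ = 1) (hh : ‖h‖ < 1) :
    (conj h * (mobiusTc h z - z)).re =
      2 * (z * conj h).im ^ 2 / Complex.normSq (1 + z * conj h) := by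
  have hden := one_add_mul_conj_ne_zero hz.le hh
  have hzz := mul_conj_eq_one_of_norm_eq_one hz
  set u := z * conj h with hu
  have huu : u * conj u = h * conj h := by
    rw [hu, map_mul, Complex.conj_conj]
    linear_combination h * conj h * hzz
  have hquot : conj h * (mobiusTc h z - z) = (u * conj u - u ^ 2) / (1 + u) := by
    rw [huu, mobiusTc, eq_div_iff hden, mul_assoc, sub_mul, ← hu, div_mul_cancel₀ _ hden, hu]
    ring
  rw [hquot, Complex.div_re, ← add_div]
  congr 1
  simp only [pow_two, Complex.add_re, Complex.add_im, Complex.sub_re, Complex.sub_im,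
    Complex.one_re, Complex.one_im, Complex.mul_re, Complex.mul_im, Complex.conj_re,
    Complex.conj_im]
  ring

lemma sq_eq_div_conj_of_im_mul_conj_eq_zero (hz : ‖z‖ = 1) (h0 : h ≠ 0)
    (him : (z * conj h).im = 0) : z ^ 2 = h / conj h := by
  have hreal : conj z * h = z * conj h := by simpa using Complex.conj_eq_iff_im.2 him
  have hzz := mul_conj_eq_one_of_norm_eq_one hz
  rw [eq_div_iff ((map_ne_zero conj).2 h0)]
  linear_combination h * hzz - z * hreal

lemma norm_add_mul_neg_sub_mul_conj_le (V m : ℂ) {M t : ℝ} (ht : 0 ≤ t) (htM : t * M ≤ 1) :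
    ‖V + M * -(t * V) - m * conj (-(t * V))‖ ≤ ‖V‖ - t * ‖V‖ * (M - ‖m‖) := by
  have hsplit : V + M * -(t * V) - m * conj (-(t * V)) =
      (1 - t * M : ℝ) * V + t * (m * conj V) := by
    simp only [map_neg, map_mul, Complex.conj_ofReal]
    push_cast
    ring
  rw [hsplit]
  refine (norm_add_le _ _).trans_eq ?_
  simp only [norm_mul, Complex.norm_real, Complex.norm_conj, Real.norm_of_nonneg ht,
    Real.norm_of_nonneg (sub_nonneg.2 htM)]
  ring

end Mobius

section Atomless

variable {α β : Type*} [MeasurableSpace α] {μ : Measure α}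

lemma ae_ne_of_injOn [NullSingletonClass μ] {F : α → β} {s : Set α} (hF : Set.InjOn F s)
    (hs : ∀ᵐ x ∂μ, x ∈ s) (c : β) : ∀ᵐ x ∂μ, F x ≠ c := by
  have hfiber : (s ∩ F ⁻¹' {c}).Subsingleton := fun x hx y hy =>
    hF hx.1 hy.1 (hx.2.trans hy.2.symm)
  filter_upwards [hs, measure_eq_zero_iff_ae_notMem.1 (hfiber.measure_zero μ)] with x hx hxc heq
  exact hxc ⟨hx, heq⟩

lemma nullSingletonClass_map [MeasurableSpace β] [MeasurableSingletonClass β] {F : α → β}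
    (hF : AEMeasurable F μ) (hne : ∀ c, ∀ᵐ x ∂μ, F x ≠ c) : NullSingletonClass (μ.map F) where
  measure_singleton c := by
    rw [Measure.map_apply_of_aemeasurable hF (measurableSet_singleton c)]
    exact measure_eq_zero_iff_ae_notMem.2 (hne c)

lemma norm_integral_lt_measureReal_univ {E : Type*} [NormedAddCommGroup E] [NormedSpace ℝ E]
    [CompleteSpace E] [StrictConvexSpace ℝ E] [IsFiniteMeasure μ] [NeZero μ] {g : α → E}
    (hg : ∀ᵐ x ∂μ, ‖g x‖ ≤ 1) (hne : ∀ c, ∀ᵐ x ∂μ, g x ≠ c) :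
    ‖∫ x, g x ∂μ‖ < μ.real Set.univ := by
  rcases ae_eq_const_or_norm_integral_lt_of_norm_le_const hg with hconst | hlt
  · obtain ⟨x, hx, hx'⟩ := (hconst.and (hne _)).exists
    exact absurd hx hx'
  · simpa using hlt

end Atomless

section CircleMeasure

variable {ν : Measure ℂ} {w h : ℂ}

lemma ae_sq_ne [NullSingletonClass ν] (c : ℂ) : ∀ᵐ z ∂ν, z ^ 2 ≠ c := by
  obtain ⟨s, rfl⟩ := IsAlgClosed.exists_pow_nat_eq c two_pos
  filter_upwards [ν.ae_ne s, ν.ae_ne (-s)] with z hz hz' hsq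
  exact (sq_eq_sq_iff_eq_or_eq_neg.1 hsq).elim hz hz'

lemma ae_norm_eq_one_map_mobiusTc (hν : ∀ᵐ z ∂ν, ‖z‖ = 1) (hw : ‖w‖ < 1) :
    ∀ᵐ z ∂ν.map (mobiusTc w), ‖z‖ = 1 :=
  (ae_map_iff (measurable_mobiusTc w).aemeasurable
    (measurableSet_eq_fun measurable_norm measurable_const)).2
    (hν.mono fun _ hz => norm_mobiusTc_eq_one hz hw)

lemma nullSingletonClass_map_mobiusTc [NullSingletonClass ν] (hν : ∀ᵐ z ∂ν, ‖z‖ = 1)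
    (hw : ‖w‖ < 1) : NullSingletonClass (ν.map (mobiusTc w)) :=
  nullSingletonClass_map (measurable_mobiusTc w).aemeasurable <|
    ae_ne_of_injOn (injOn_mobiusTc hw) (hν.mono fun _ hz => mem_closedBall_zero_iff.2 hz.le)

lemma neZero_map_mobiusTc [NeZero ν] (w : ℂ) : NeZero (ν.map (mobiusTc w)) :=
  ⟨(Measure.map_ne_zero_iff (measurable_mobiusTc w).aemeasurable).2 (NeZero.ne ν)⟩

lemma norm_integral_mobiusTc_map (hν : ∀ᵐ z ∂ν, ‖z‖ = 1) (hw : ‖w‖ < 1) (hh : ‖h‖ ≤ 1) :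
    ‖∫ z, mobiusTc h z ∂ν.map (mobiusTc w)‖ = ‖∫ z, mobiusTc (mobiusTc w h) z ∂ν‖ := by
  rw [integral_map (measurable_mobiusTc w).aemeasurable
    (measurable_mobiusTc h).aestronglyMeasurable,
    integral_congr_ae (hν.mono fun z hz => mobiusTc_mobiusTc hz.le hw hh), integral_const_mul,
    norm_mul, norm_div, Complex.norm_conj,
    div_self (norm_ne_zero_iff.2 (one_add_mul_conj_ne_zero hh hw)), one_mul]

lemma integral_mobiusTc_of_norm_eq_one [NullSingletonClass ν] (hw : ‖w‖ = 1) :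
    ∫ z, mobiusTc w z ∂ν = ν.real Set.univ * w := by
  rw [integral_congr_ae ((ν.ae_ne (-w)).mono fun z => mobiusTc_eq_self_of_norm_eq_one hw),
    integral_const, Complex.real_smul]

variable [IsFiniteMeasure ν]

lemma integrable_mobiusTc (hν : ∀ᵐ z ∂ν, ‖z‖ = 1) (w : ℂ) : Integrable (mobiusTc w) ν :=
  .of_bound (measurable_mobiusTc w).aestronglyMeasurable 1
    (hν.mono fun _ hz => norm_mobiusTc_le_one hz w)

lemma integrable_pow_of_norm_eq_one (hν : ∀ᵐ z ∂ν, ‖z‖ = 1) (n : ℕ) :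
    Integrable (fun z => z ^ n) ν :=
  .of_bound (by fun_prop) 1 (hν.mono fun z hz => by simp [hz])

lemma integrable_id_of_norm_eq_one (hν : ∀ᵐ z ∂ν, ‖z‖ = 1) : Integrable (fun z => z) ν := by
  simpa only [pow_one] using integrable_pow_of_norm_eq_one hν 1

lemma continuous_integral_mobiusTc [NullSingletonClass ν] (hν : ∀ᵐ z ∂ν, ‖z‖ = 1) :
    Continuous fun w => ∫ z, mobiusTc w z ∂ν := by
  refine continuous_iff_continuousAt.2 fun w =>
    continuousAt_of_dominated (bound := fun _ => 1) ?_ ?_ (integrable_const _) ?_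
  · exact .of_forall fun v => (measurable_mobiusTc v).aestronglyMeasurable
  · exact .of_forall fun v => hν.mono fun z hz => norm_mobiusTc_le_one hz v
  · filter_upwards [hν, ν.ae_ne (-w)] with z hz hzw
    exact continuousAt_mobiusTc_left hz hzw

lemma norm_integral_mobiusTc_sub_linear_le (hν : ∀ᵐ z ∂ν, ‖z‖ = 1) (hh : ‖h‖ ≤ 1 / 2) :
    ‖∫ z, mobiusTc h z ∂ν - (∫ z, z ∂ν + ν.real Set.univ * h - (∫ z, z ^ 2 ∂ν) * conj h)‖ ≤
      4 * ‖h‖ ^ 2 * ν.real Set.univ := by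
  have hint_add : Integrable (fun z => z + h) ν :=
    (integrable_id_of_norm_eq_one hν).add (integrable_const h)
  have hint_sq : Integrable (fun z => z ^ 2 * conj h) ν :=
    (integrable_pow_of_norm_eq_one hν 2).mul_const _
  have hint_linear : Integrable (fun z => z + h - z ^ 2 * conj h) ν := hint_add.sub hint_sq
  have hlinear : ∫ z, (z + h - z ^ 2 * conj h) ∂ν =
      ∫ z, z ∂ν + ν.real Set.univ * h - (∫ z, z ^ 2 ∂ν) * conj h := by
    rw [integral_sub hint_add hint_sq, integral_mul_const,
      integral_add (integrable_id_of_norm_eq_one hν) (integrable_const h), integral_const,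
      Complex.real_smul]
  rw [← hlinear, ← integral_sub (integrable_mobiusTc hν h) hint_linear]
  exact norm_integral_le_of_norm_le_const
    (hν.mono fun z hz => norm_mobiusTc_sub_linear_le hz hh)

variable [NullSingletonClass ν] [NeZero ν]

lemma norm_integral_id_lt_measureReal_univ (hν : ∀ᵐ z ∂ν, ‖z‖ = 1) :
    ‖∫ z, z ∂ν‖ < ν.real Set.univ :=
  norm_integral_lt_measureReal_univ (hν.mono fun _ hz => hz.le) ν.ae_ne

lemma norm_integral_sq_lt_measureReal_univ (hν : ∀ᵐ z ∂ν, ‖z‖ = 1) :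
    ‖∫ z, z ^ 2 ∂ν‖ < ν.real Set.univ :=
  norm_integral_lt_measureReal_univ (hν.mono fun z hz => by simp [hz]) ae_sq_ne

lemma exists_norm_integral_mobiusTc_lt (hν : ∀ᵐ z ∂ν, ‖z‖ = 1) (hV : ∫ z, z ∂ν ≠ 0) :
    ∃ h : ℂ, ‖h‖ < 1 ∧ ‖∫ z, mobiusTc h z ∂ν‖ < ‖∫ z, z ∂ν‖ := by
  have hVM := norm_integral_id_lt_measureReal_univ hν
  have hmM := norm_integral_sq_lt_measureReal_univ hν
  have htaylor := fun h : ℂ => norm_integral_mobiusTc_sub_linear_le (h := h) hν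
  set V := ∫ z, z ∂ν
  set m := ∫ z, z ^ 2 ∂ν
  set M := ν.real Set.univ
  have hV_pos : 0 < ‖V‖ := norm_pos_iff.2 hV
  have hM_pos : 0 < M := hV_pos.trans hVM
  -- This `t` makes the quadratic error at most half of the first-order gain `t ‖V‖ (M - ‖m‖)`.
  obtain ⟨t, ht_pos, ht⟩ : ∃ t : ℝ, 0 < t ∧ 8 * t * M ^ 2 = M - ‖m‖ :=
    ⟨(M - ‖m‖) / (8 * M ^ 2), div_pos (sub_pos.2 hmM) (by positivity), by field_simp⟩
  have htM : t * M ≤ 1 / 8 := by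
    refine le_of_mul_le_mul_right ?_ hM_pos
    linarith [norm_nonneg m]
  have hstep : ‖-(t * V)‖ = t * ‖V‖ := by
    rw [norm_neg, norm_mul, Complex.norm_real, Real.norm_of_nonneg ht_pos.le]
  have hstep_le : t * ‖V‖ ≤ 1 / 8 := (mul_le_mul_of_nonneg_left hVM.le ht_pos.le).trans htM
  refine ⟨-(t * V), by linarith, ?_⟩
  have hlinear_le : ‖V + M * -(t * V) - m * conj (-(t * V))‖ ≤ ‖V‖ - t * ‖V‖ * (M - ‖m‖) :=
    norm_add_mul_neg_sub_mul_conj_le V m ht_pos.le (by linarith)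
  have herror_le : 4 * ‖-(t * V)‖ ^ 2 * M ≤ t * ‖V‖ * (M - ‖m‖) / 2 :=
    calc 4 * ‖-(t * V)‖ ^ 2 * M = 4 * t ^ 2 * M * ‖V‖ * ‖V‖ := by rw [hstep]; ring
      _ ≤ 4 * t ^ 2 * M * ‖V‖ * M := by gcongr
      _ = t * ‖V‖ * (M - ‖m‖) / 2 := by rw [← ht]; ring
  have hgain : 0 < t * ‖V‖ * (M - ‖m‖) := mul_pos (mul_pos ht_pos hV_pos) (sub_pos.2 hmM)
  calc ‖∫ z, mobiusTc (-(t * V)) z ∂ν‖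
      ≤ ‖V + M * -(t * V) - m * conj (-(t * V))‖ + 4 * ‖-(t * V)‖ ^ 2 * M :=
        (norm_le_insert' _ _).trans (add_le_add_right (htaylor _ (by linarith)) _)
    _ < ‖V‖ := by linarith

lemma eq_zero_of_integral_mobiusTc_eq_zero (hν : ∀ᵐ z ∂ν, ‖z‖ = 1) (hh : ‖h‖ < 1)
    (hV : ∫ z, z ∂ν = 0) (hVh : ∫ z, mobiusTc h z ∂ν = 0) : h = 0 := by
  by_contra h0
  have hint : Integrable (fun z => mobiusTc h z - z) ν :=
    (integrable_mobiusTc hν h).sub (integrable_id_of_norm_eq_one hν)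
  have hzero : ∫ z, (conj h * (mobiusTc h z - z)).re ∂ν = 0 := by
    rw [← RCLike.re_eq_complex_re, integral_re (hint.const_mul _), integral_const_mul,
      integral_sub (integrable_mobiusTc hν h) (integrable_id_of_norm_eq_one hν), hV, hVh]
    simp
  have hnonneg : ∀ᵐ z ∂ν, 0 ≤ (conj h * (mobiusTc h z - z)).re := by
    filter_upwards [hν] with z hz
    rw [re_conj_mul_mobiusTc_sub hz hh]
    positivity [Complex.normSq_nonneg (1 + z * conj h)]
  have hae := (integral_eq_zero_iff_of_nonneg_ae hnonneg (hint.const_mul _).re).1 hzero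
  obtain ⟨z, hz, hre, hz_sq⟩ := (hν.and (hae.and (ae_sq_ne (h / conj h)))).exists
  have hden := Complex.normSq_pos.2 (one_add_mul_conj_ne_zero hz.le hh)
  have him : (z * conj h).im = 0 := by
    simpa [re_conj_mul_mobiusTc_sub hz hh, hden.ne'] using hre
  exact hz_sq (sq_eq_div_conj_of_im_mul_conj_eq_zero hz h0 him)

lemma exists_ball_forall_norm_integral_mobiusTc_le (hν : ∀ᵐ z ∂ν, ‖z‖ = 1) :
    ∃ w : ℂ, ‖w‖ < 1 ∧
      ∀ v : ℂ, ‖v‖ ≤ 1 → ‖∫ z, mobiusTc w z ∂ν‖ ≤ ‖∫ z, mobiusTc v z ∂ν‖ := by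
  obtain ⟨w, hw, hmin⟩ := (isCompact_closedBall (0 : ℂ) 1).exists_isMinOn
    (nonempty_closedBall.2 zero_le_one) (continuous_integral_mobiusTc hν).norm.continuousOn
  have hle : ∀ v : ℂ, ‖v‖ ≤ 1 → ‖∫ z, mobiusTc w z ∂ν‖ ≤ ‖∫ z, mobiusTc v z ∂ν‖ :=
    fun v hv => hmin (mem_closedBall_zero_iff.2 hv)
  refine ⟨w, (mem_closedBall_zero_iff.1 hw).lt_of_ne fun hw1 => ?_, hle⟩
  have hboundary : ‖∫ z, mobiusTc w z ∂ν‖ = ν.real Set.univ := by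
    rw [integral_mobiusTc_of_norm_eq_one hw1, norm_mul, hw1, mul_one, Complex.norm_real,
      Real.norm_of_nonneg measureReal_nonneg]
  have hcenter := hle 0 (by simp)
  simp only [mobiusTc_zero_left, hboundary] at hcenter
  exact hcenter.not_gt (norm_integral_id_lt_measureReal_univ hν)

lemma exists_integral_mobiusTc_eq_zero (hν : ∀ᵐ z ∂ν, ‖z‖ = 1) :
    ∃ w : ℂ, ‖w‖ < 1 ∧ ∫ z, mobiusTc w z ∂ν = 0 := by
  obtain ⟨w, hw, hmin⟩ := exists_ball_forall_norm_integral_mobiusTc_le hν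
  refine ⟨w, hw, of_not_not fun hV => ?_⟩
  have := nullSingletonClass_map_mobiusTc hν hw
  have := neZero_map_mobiusTc (ν := ν) w
  have hmap : ∫ z, z ∂ν.map (mobiusTc w) = ∫ z, mobiusTc w z ∂ν :=
    integral_map (measurable_mobiusTc w).aemeasurable (by fun_prop)
  obtain ⟨h, hh, hlt⟩ := exists_norm_integral_mobiusTc_lt
    (ae_norm_eq_one_map_mobiusTc hν hw) (hmap.trans_ne hV)
  rw [norm_integral_mobiusTc_map hν hw hh.le, hmap] at hlt
  exact hlt.not_ge (hmin _ (norm_mobiusTc_lt_one hh hw).le)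

lemma eq_of_integral_mobiusTc_eq_zero {a b : ℂ} (hν : ∀ᵐ z ∂ν, ‖z‖ = 1) (ha : ‖a‖ < 1)
    (hb : ‖b‖ < 1) (hVa : ∫ z, mobiusTc a z ∂ν = 0) (hVb : ∫ z, mobiusTc b z ∂ν = 0) :
    a = b := by
  have := nullSingletonClass_map_mobiusTc hν ha
  have := neZero_map_mobiusTc (ν := ν) a
  have hna : ‖-a‖ < 1 := (norm_neg a).trans_lt ha
  have hh := norm_mobiusTc_lt_one hb hna
  have hab : mobiusTc a (mobiusTc (-a) b) = b := by
    simpa using mobiusTc_neg_mobiusTc hb.le hna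
  have hmap : ∫ z, z ∂ν.map (mobiusTc a) = 0 :=
    (integral_map (measurable_mobiusTc a).aemeasurable (by fun_prop)).trans hVa
  have hzero : mobiusTc (-a) b = 0 := by
    refine eq_zero_of_integral_mobiusTc_eq_zero (ae_norm_eq_one_map_mobiusTc hν ha) hh hmap ?_
    rw [← norm_eq_zero, norm_integral_mobiusTc_map hν ha hh.le, hab, hVb, norm_zero]
  rw [← hab, hzero]
  simp [mobiusTc]

theorem existsUnique_integral_mobiusTc_eq_zero (hν : ∀ᵐ z ∂ν, ‖z‖ = 1) :
    ∃! w : ℂ, w ∈ ball (0 : ℂ) 1 ∧ ∫ z, mobiusTc w z ∂ν = 0 := by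
  simp only [mem_ball_zero_iff]
  exact existsUnique_of_exists_of_unique (exists_integral_mobiusTc_eq_zero hν)
    fun _ _ ha hb => eq_of_integral_mobiusTc_eq_zero hν ha.1 hb.1 ha.2 hb.2

end CircleMeasure

section Density

variable {X : Type*} [MeasurableSpace X] {μ : Measure X} {f : X → ℝ}

lemma withDensity_ofReal_ne_zero (hf_int : Integrable f μ) (hf_pos : 0 < ∫ x, f x ∂μ) :
    μ.withDensity (fun x => ENNReal.ofReal (f x)) ≠ 0 := by
  rw [Ne, withDensity_eq_zero_iff hf_int.aemeasurable.ennreal_ofReal]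
  intro hzero
  refine hf_pos.not_ge (integral_nonpos_of_ae ?_)
  exact hzero.mono fun x hx => ENNReal.ofReal_eq_zero.1 hx

lemma integral_withDensity_ofReal_eq_integral_smul {E : Type*} [NormedAddCommGroup E]
    [NormedSpace ℝ E] (hf : AEMeasurable f μ) (hf_nonneg : 0 ≤ᵐ[μ] f) (G : X → E) :
    ∫ x, G x ∂μ.withDensity (fun x => ENNReal.ofReal (f x)) = ∫ x, f x • G x ∂μ := by
  rw [integral_withDensity_eq_integral_toReal_smul₀ hf.ennreal_ofReal
    (.of_forall fun _ => ENNReal.ofReal_lt_top)]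
  exact integral_congr_ae (hf_nonneg.mono fun x hx => by simp only [ENNReal.toReal_ofReal hx])

theorem weinstock_orthogonality_jordan_curve_general {F : X → ℂ} (hf_nonneg : 0 ≤ᵐ[μ] f)
    (hf_int : Integrable f μ) (hf_pos : 0 < ∫ x, f x ∂μ) (hF : AEMeasurable F μ)
    (hF_norm : ∀ᵐ x ∂μ, ‖F x‖ = 1) (hF_ne : ∀ c, ∀ᵐ x ∂μ, F x ≠ c) :
    ∃! w : ℂ, w ∈ ball (0 : ℂ) 1 ∧ ∫ x, f x • mobiusTc w (F x) ∂μ = 0 := by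
  set ρ := μ.withDensity fun x => ENNReal.ofReal (f x)
  have hρμ : ρ ≪ μ := withDensity_absolutelyContinuous _ _
  have hFρ : AEMeasurable F ρ := hF.mono_ac hρμ
  have : IsFiniteMeasure ρ := isFiniteMeasure_withDensity_ofReal hf_int.2
  have : NeZero (ρ.map F) :=
    ⟨(Measure.map_ne_zero_iff hFρ).2 (withDensity_ofReal_ne_zero hf_int hf_pos)⟩
  have : NullSingletonClass (ρ.map F) :=
    nullSingletonClass_map hFρ fun c => hρμ.ae_le (hF_ne c)
  have hcircle : ∀ᵐ z ∂ρ.map F, ‖z‖ = 1 :=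
    (ae_map_iff hFρ (measurableSet_eq_fun measurable_norm measurable_const)).2
      (hρμ.ae_le hF_norm)
  have hlaw (w : ℂ) : ∫ z, mobiusTc w z ∂ρ.map F = ∫ x, f x • mobiusTc w (F x) ∂μ := by
    rw [integral_map hFρ (measurable_mobiusTc w).aestronglyMeasurable,
      integral_withDensity_ofReal_eq_integral_smul hf_int.aemeasurable hf_nonneg]
  simpa only [hlaw] using existsUnique_integral_mobiusTc_eq_zero hcircle

end Density

/-- Weinstock orthogonality on a rectifiable Jordan curve: for a nonnegative density `f`
on the curve (integrable for one-dimensional Hausdorff measure) with positive total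
integral, and a homeomorphism `F` from the curve onto the unit circle, there is a unique
point `w` in the disk such that `T_w ∘ F` is orthogonal to `f`. -/
theorem weinstock_orthogonality_jordan_curve
    (γ : ℂ → ℂ) (hγ_cont : ContinuousOn γ (sphere (0 : ℂ) 1))
    (hγ_inj : Set.InjOn γ (sphere (0 : ℂ) 1))
    (J : Set ℂ) (hJ : J = γ '' sphere (0 : ℂ) 1)
    (hJ_rect : μH[1] J < ⊤)
    (f : ℂ → ℝ) (hf_nonneg : ∀ z ∈ J, 0 ≤ f z)
    (hf_int : Integrable f ((μH[1]).restrict J))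
    (hf_pos : 0 < ∫ z in J, f z ∂μH[1])
    (F : ℂ → ℂ) (hF_bij : Set.BijOn F J (sphere (0 : ℂ) 1))
    (hF_cont : ContinuousOn F J)
    (hF_inv_cont : ContinuousOn (Function.invFunOn F J) (sphere (0 : ℂ) 1)) :
    ∃! w : ℂ, w ∈ ball (0 : ℂ) 1 ∧
      ∫ z in J, f z • mobiusTc w (F z) ∂μH[1] = 0 := by
  have := Measure.nullSingletonClass_hausdorff ℂ one_pos
  have hJ_meas : MeasurableSet J :=
    hJ ▸ ((isCompact_sphere 0 1).image_of_continuousOn hγ_cont).measurableSet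
  exact weinstock_orthogonality_jordan_curve_general
    (ae_restrict_of_forall_mem hJ_meas hf_nonneg) hf_int hf_pos (hF_cont.aemeasurable hJ_meas)
    (ae_restrict_of_forall_mem hJ_meas fun _ hz => mem_sphere_zero_iff_norm.1 (hF_bij.mapsTo hz))
    (ae_ne_of_injOn hF_bij.injOn (ae_restrict_mem hJ_meas))
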